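/- Let k be an algebraically closed field, let A and B be commutative and cocommutative Hopf algebras over k, and let f : A → B be a homomorphism of Hopf algebras over k such that B, regarded as an A-module via f, is faithfully flat. Then every k-algebra homomorphism x : A → k extends along f: there exists a k-algebra homomorphism y : B → k with y ∘ f = x. -/

import Mathlib

open scoped TensorProduct

/-!
Faithful flatness makes `A → B` injective. Every commutative Hopf algebra is a directed union of
finitely generated Hopf subalgebras, spanned by matrix coefficients of finite comodules. Between
finitely generated Hopf algebras, an injection is dominant, so by Chevalley's theorem its image on
points contains a nonempty open set; as the image is a subgroup, translating points into this open
set shows that it is everything. Hence the fibre of an arbitrary injection at a `k`-point is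
nonempty: a relation witnessing the contrary would live in finitely generated Hopf subalgebras. By
the Nullstellensatz, a `k`-point of a Hopf subalgebra `C` then extends to `C ⊔ T` for every finitely
generated Hopf subalgebra `T`, and Zorn's lemma extends it to the whole algebra.
-/

section Slices

variable {R M N P : Type*} [CommSemiring R] [AddCommMonoid M] [Module R M]
  [AddCommMonoid N] [Module R N] [AddCommMonoid P] [Module R P]

/-- The left slice map `φ ⊗ id : M ⊗ N → R ⊗ N ≃ N` of a linear functional `φ` on `M`. -/
noncomputable def leftSlice (N : Type*) [AddCommMonoid N] [Module R N] (φ : M →ₗ[R] R) :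
    M ⊗[R] N →ₗ[R] N :=
  (TensorProduct.lid R N).toLinearMap ∘ₗ φ.rTensor N

@[simp]
lemma leftSlice_tmul (φ : M →ₗ[R] R) (m : M) (n : N) : leftSlice N φ (m ⊗ₜ n) = φ m • n := by
  simp [leftSlice]

lemma comp_leftSlice (g : N →ₗ[R] P) (φ : M →ₗ[R] R) :
    g ∘ₗ leftSlice N φ = leftSlice P φ ∘ₗ g.lTensor M :=
  TensorProduct.ext' fun m n ↦ by simp

lemma leftSlice_comp_assoc (φ : M →ₗ[R] R) :
    leftSlice (N ⊗[R] P) φ ∘ₗ (TensorProduct.assoc R M N P).toLinearMap =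
      (leftSlice N φ).rTensor P :=
  TensorProduct.ext_threefold fun m n p ↦ by simp [TensorProduct.smul_tmul']

end Slices

section Subcomodules

open Coalgebra

lemma comul_comp_leftSlice_comul {R C : Type*} [CommSemiring R] [AddCommMonoid C] [Module R C]
    [Coalgebra R C] (φ : C →ₗ[R] R) :
    comul ∘ₗ leftSlice C φ ∘ₗ comul = (leftSlice C φ ∘ₗ comul).rTensor C ∘ₗ comul := by
  rw [← LinearMap.comp_assoc, comp_leftSlice, LinearMap.comp_assoc, ← coassoc,
    ← LinearMap.comp_assoc, leftSlice_comp_assoc, ← LinearMap.comp_assoc, ← LinearMap.rTensor_comp]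

variable {k C : Type*} [Field k] [AddCommGroup C] [Module k C] [Coalgebra k C]

lemma exists_finite_subcomodule (c : C) :
    ∃ L : Submodule k C, Module.Finite k L ∧ c ∈ L ∧
      ∀ x ∈ L, comul (R := k) x ∈ LinearMap.range (L.subtype.lTensor C) := by
  let m := Module.Basis.ofVectorSpace k C
  obtain ⟨n, hn⟩ := TensorProduct.eq_repr_basis_left m (comul (R := k) c)
  have hslice (φ : C →ₗ[k] k) : leftSlice C φ (comul c) = n.sum fun i x ↦ φ (m i) • x := by
    simp [← hn, Finsupp.sum]
  have hcoord (i) : leftSlice C (m.coord i) (comul c) = n i := by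
    classical
    simp +contextual [hslice, Finsupp.sum, Finsupp.single_apply, ite_smul]
  let L := Submodule.span k (n '' n.support)
  have hnL (i) (hi : i ∈ n.support) : n i ∈ L := Submodule.subset_span ⟨i, hi, rfl⟩
  have hcL : comul c ∈ LinearMap.range (L.subtype.lTensor C) := by
    rw [← hn]
    exact sum_mem fun i hi ↦ ⟨m i ⊗ₜ ⟨n i, hnL i hi⟩, rfl⟩
  refine ⟨L, .span_of_finite k (n.support.finite_toSet.image n), ?_, fun x hx ↦ ?_⟩
  · have hc : leftSlice C counit (comul (R := k) c) = c := by simp [leftSlice]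
    rw [← hc, hslice]
    exact sum_mem fun i hi ↦ L.smul_mem _ (hnL i hi)
  · suffices L ≤ (LinearMap.range (L.subtype.lTensor C)).comap comul from this hx
    rw [Submodule.span_le]
    rintro _ ⟨i, -, rfl⟩
    obtain ⟨t, ht⟩ := hcL
    refine ⟨(leftSlice C (m.coord i) ∘ₗ comul).rTensor L t, ?_⟩
    rw [← hcoord, ← LinearMap.comp_apply, LinearMap.lTensor_comp_rTensor,
      ← LinearMap.rTensor_comp_lTensor, LinearMap.comp_apply, ht]
    exact congr($(comul_comp_leftSlice_comul (m.coord i)) c).symm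

lemma eq_of_sum_tmul_eq {M N ι : Type*} [AddCommGroup M] [Module k M]
    [AddCommGroup N] [Module k N] [Fintype ι] {v : ι → N} (hv : LinearIndependent k v)
    {x y : ι → M} (h : ∑ i, x i ⊗ₜ[k] v i = ∑ i, y i ⊗ₜ[k] v i) : x = y := by
  classical
  funext i
  obtain ⟨φ, hφ⟩ := LinearMap.exists_extend ((Finsupp.lapply i).comp hv.repr)
  have hφv (j) : φ (v j) = if j = i then 1 else 0 := by
    have := congr($hφ ⟨v j, Submodule.subset_span ⟨j, rfl⟩⟩)
    simpa [hv.repr_eq_single j, Finsupp.single_apply] using this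
  simpa [hφv] using congrArg (TensorProduct.rid k M ∘ φ.lTensor M) h

/-- In terms of the basis `e` of a finite subcomodule, with `Δ (e i) = ∑ l, d i l ⊗ e l`,
coassociativity reads `Δ (d i j) = ∑ l, d i l ⊗ d l j`. -/
lemma exists_comultiplicative_matrix (c : C) :
    ∃ (n : ℕ) (d : Fin n → Fin n → C),
      (∀ i j, comul (R := k) (d i j) = ∑ l, d i l ⊗ₜ d l j) ∧
      c ∈ Submodule.span k (Set.range fun p : Fin n × Fin n ↦ d p.1 p.2) := by
  obtain ⟨L, _, hcL, hL⟩ := exists_finite_subcomodule (k := k) c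
  let e := Module.finBasis k L
  have hcoeff (i) : ∃ d : Fin (Module.finrank k L) → C,
      comul (R := k) (e i : C) = ∑ j, d j ⊗ₜ[k] (e j : C) := by
    obtain ⟨t, ht⟩ := hL (e i) (e i).2
    obtain ⟨d, rfl⟩ := TensorProduct.eq_repr_basis_right e t
    exact ⟨d, by simp [← ht, Finsupp.sum_fintype]⟩
  choose d hd using hcoeff
  refine ⟨_, d, fun i ↦ ?_, ?_⟩
  · refine congrFun (eq_of_sum_tmul_eq
      (e.linearIndependent.map' L.subtype L.ker_subtype) ?_)
    apply (TensorProduct.assoc k C C C).injective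
    have := coassoc_apply (R := k) (e i : C)
    simp only [hd, map_sum, LinearMap.rTensor_tmul, LinearMap.lTensor_tmul,
      TensorProduct.tmul_sum] at this
    simp only [Function.comp_apply, Submodule.subtype_apply, map_sum, this, TensorProduct.sum_tmul,
      TensorProduct.assoc_tmul]
    exact Finset.sum_comm
  · have hed (i) : (e i : C) = ∑ j, counit (R := k) (e j : C) • d i j := by
      simpa [hd] using congrArg (TensorProduct.rid k C)
        (lTensor_counit_comul (R := k) (e i : C)).symm
    have hc : ∑ i, e.repr ⟨c, hcL⟩ i • (e i : C) = c := by
      simpa only [map_sum, map_smul, Submodule.subtype_apply] using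
        congrArg L.subtype (e.sum_repr ⟨c, hcL⟩)
    rw [← hc]
    refine sum_mem fun i _ ↦ Submodule.smul_mem _ _ ?_
    rw [hed]
    exact sum_mem fun j _ ↦ Submodule.smul_mem _ _ (Submodule.subset_span ⟨(i, j), rfl⟩)

end Subcomodules

section GenericImage

open PrimeSpectrum

variable {R S : Type*} [CommRing R] [CommRing S]

lemma exists_notMem_isNilpotent_mul {p : Ideal R} (hp : p ∈ minimalPrimes R) {x : R}
    (hx : x ∈ p) : ∃ t ∉ p, IsNilpotent (t * x) := by
  have := hp.1.1
  have hx' : algebraMap R (Localization.AtPrime p) x ∈ (Ideal.map (algebraMap R _) ⊥).radical := by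
    rw [IsLocalization.AtPrime.radical_map_of_mem_minimalPrimes _ p ⊥ hp]
    exact Ideal.mem_map_of_mem _ hx
  obtain ⟨n, hn⟩ := hx'
  rw [Ideal.map_bot, Ideal.mem_bot, ← map_pow, IsLocalization.map_eq_zero_iff p.primeCompl] at hn
  obtain ⟨t, ht⟩ := hn
  refine ⟨t, t.2, n + 1, ?_⟩
  calc (t * x : R) ^ (n + 1) = t * x ^ n * (t ^ n * x) := by ring
    _ = 0 := by rw [ht, zero_mul]

lemma exists_basicOpen_subset_of_isConstructible {s : Set (PrimeSpectrum R)}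
    (hs : Topology.IsConstructible s) {p : PrimeSpectrum R} (hp : p.asIdeal ∈ minimalPrimes R)
    (hps : p ∈ s) : ∃ f ∉ p.asIdeal, (basicOpen f : Set (PrimeSpectrum R)) ⊆ s := by
  obtain ⟨T, rfl⟩ := exists_constructibleSetData_iff.2 hs
  simp only [ConstructibleSetData.toSet, Set.mem_iUnion] at hps
  obtain ⟨c, hcT, hcg, hcf⟩ := hps
  choose t ht htg using fun i ↦ exists_notMem_isNilpotent_mul hp (hcg ⟨i, rfl⟩ : c.g i ∈ _)
  refine ⟨c.f * ∏ i, t i, ?_, fun q hq ↦ ?_⟩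
  · rw [p.2.mul_mem_iff_mem_or_mem, p.2.prod_mem_iff]
    rintro (hf | ⟨i, -, hi⟩)
    exacts [hcf (by simpa using hf), ht i hi]
  · obtain ⟨hqf, hqt⟩ : c.f ∉ q.asIdeal ∧ ∀ i, t i ∉ q.asIdeal := by
      simpa [q.2.mul_mem_iff_mem_or_mem, q.2.prod_mem_iff] using hq
    simp only [ConstructibleSetData.toSet, Set.mem_iUnion]
    refine ⟨c, hcT, ?_, by simpa using hqf⟩
    rintro _ ⟨i, rfl⟩
    exact (q.2.mem_or_mem (nilpotent_iff_mem_prime.1 (htg i) _ q.2)).resolve_left (hqt i)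

lemma exists_basicOpen_subset_range_comap [Nontrivial R] {f : R →+* S}
    (hf : Function.Injective f) (hfp : f.FinitePresentation) :
    ∃ s : R, ¬ IsNilpotent s ∧ (basicOpen s : Set (PrimeSpectrum R)) ⊆ Set.range (comap f) := by
  obtain ⟨p, hp⟩ := Ideal.nonempty_minimalPrimes (bot_ne_top (α := Ideal R))
  have := hp.1.1
  obtain ⟨q, hq, hqp⟩ := Ideal.exists_comap_eq_of_mem_minimalPrimes_of_injective hf p hp
  obtain ⟨s, hsp, hs⟩ := exists_basicOpen_subset_of_isConstructible
    (isConstructible_range_comap hfp) (p := ⟨p, this⟩) hp ⟨⟨q, hq⟩, PrimeSpectrum.ext hqp⟩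
  exact ⟨s, fun hn ↦ hsp (nilpotent_iff_mem_prime.1 hn p this), hs⟩

end GenericImage

section Points

variable {k : Type*} [Field k] [IsAlgClosed k] {R S : Type*} [CommRing R] [CommRing S]
  [Algebra k R] [Algebra k S]

variable (k R) in
lemma nonempty_algHom_of_finiteType [Nontrivial R] [Algebra.FiniteType k R] :
    Nonempty (R →ₐ[k] k) := by
  obtain ⟨m, hm⟩ := Ideal.exists_maximal R
  let _ := Ideal.Quotient.field m
  have : Module.Finite k (R ⧸ m) := finite_of_finite_type_of_isJacobsonRing k (R ⧸ m)
  let e := AlgEquiv.ofBijective (Algebra.ofId k (R ⧸ m))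
    IsAlgClosed.algebraMap_bijective_of_isIntegral
  exact ⟨(e.symm : (R ⧸ m) →ₐ[k] k).comp (Ideal.Quotient.mkₐ k m)⟩

lemma exists_algHom_apply_ne_zero [Algebra.FiniteType k R] {s : R} (hs : ¬ IsNilpotent s) :
    ∃ u : R →ₐ[k] k, u s ≠ 0 := by
  have : Nontrivial (Localization.Away s) := by
    rwa [← not_subsingleton_iff_nontrivial, IsLocalization.subsingleton_iff (M := .powers s)]
  have : Algebra.FiniteType k (Localization.Away s) :=
    .trans (S := R) inferInstance (IsLocalization.finiteType_of_monoid_fg (.powers s) _)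
  obtain ⟨u⟩ := nonempty_algHom_of_finiteType k (Localization.Away s)
  exact ⟨u.comp (IsScalarTower.toAlgHom k R _),
    ((IsLocalization.Away.algebraMap_isUnit s).map u).ne_zero⟩

lemma exists_algHom_comp_eq_of_map_ker_ne_top {f : R →ₐ[k] S} (hf : f.FiniteType)
    {z : R →ₐ[k] k} (h : (RingHom.ker z).map f ≠ ⊤) : ∃ y : S →ₐ[k] k, y.comp f = z := by
  let π := Ideal.Quotient.mkₐ k ((RingHom.ker z).map f)
  have hπ : π.comp f = (Algebra.ofId k _).comp z := by
    ext r
    have hr : r - algebraMap k R (z r) ∈ RingHom.ker z := by simp [RingHom.mem_ker]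
    have := Ideal.Quotient.eq_zero_iff_mem.2 (Ideal.mem_map_of_mem f hr)
    simpa [π, sub_eq_zero, Algebra.ofId_apply] using this
  have : Nontrivial (S ⧸ (RingHom.ker z).map f) := Ideal.Quotient.nontrivial_iff.2 h
  have : Algebra.FiniteType k (S ⧸ (RingHom.ker z).map f) := by
    have hfπ : ((Algebra.ofId k (S ⧸ (RingHom.ker z).map f)).comp z).FiniteType :=
      hπ ▸ hf.comp_surjective (Ideal.Quotient.mkₐ_surjective k _)
    exact (RingHom.finiteType_algebraMap ..).1 (RingHom.FiniteType.of_comp_finiteType hfπ)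
  obtain ⟨u⟩ := nonempty_algHom_of_finiteType k (S ⧸ (RingHom.ker z).map f)
  refine ⟨u.comp π, ?_⟩
  rw [AlgHom.comp_assoc, hπ, ← AlgHom.comp_assoc, Subsingleton.elim (u.comp _) (AlgHom.id k k),
    AlgHom.id_comp]

lemma exists_not_isNilpotent_forall_exists_comp_eq [Nontrivial R] [IsNoetherianRing R]
    {f : R →ₐ[k] S} (hf : f.FiniteType) (hinj : Function.Injective f) :
    ∃ s : R, ¬ IsNilpotent s ∧
      ∀ u : R →ₐ[k] k, u s ≠ 0 → ∃ v : S →ₐ[k] k, v.comp f = u := by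
  obtain ⟨s, hs, hsf⟩ := exists_basicOpen_subset_range_comap hinj
    (RingHom.FinitePresentation.of_finiteType.1 hf)
  refine ⟨s, hs, fun u hu ↦ exists_algHom_comp_eq_of_map_ker_ne_top hf fun htop ↦ ?_⟩
  obtain ⟨q, hq⟩ := hsf (show ⟨RingHom.ker u, RingHom.ker_isPrime u⟩ ∈ _ from hu)
  refine q.2.ne_top (top_le_iff.1 ?_)
  rw [← htop, Ideal.map_le_iff_le_comap]
  exact congr(PrimeSpectrum.asIdeal $hq).ge

end Points

section Antipode

open Coalgebra HopfAlgebra WithConv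

variable {R A B : Type*} [CommSemiring R] [CommSemiring A] [CommSemiring B] [HopfAlgebra R A]
  [HopfAlgebra R B]

lemma antipode_antipode (b : B) : antipode R (antipode R b) = b :=
  congr(ofConv $(inv_inv (toConv (AlgHom.id R B))) b)

lemma bialgHom_antipode (f : A →ₐc[R] B) (a : A) : f (antipode R a) = antipode R (f a) := by
  have hmul : toConv ((antipodeAlgHom R B).comp (f : A →ₐ[R] B)) * toConv (f : A →ₐ[R] B) = 1 :=
    calc
      _ = toConv ((toConv (antipodeAlgHom R B) * toConv (AlgHom.id R B)).ofConv.comp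
          (f : A →ₐ[R] B)) :=
        congrArg toConv (AlgHom.convMul_comp_bialgHom_distrib _ _ f).symm
      _ = 1 := by
        rw [AlgHom.antipode_id_cancel]
        ext a
        simp [AlgHom.convOne_def]
  exact congr(ofConv $(eq_inv_of_mul_eq_one_left hmul) a).symm

/-- The comultiplication is the convolution product of the two inclusions `A → A ⊗ A`, and
inversion in the convolution group reverses products. -/
lemma comul_antipode (a : A) :
    comul (R := R) (antipode R a) =
      TensorProduct.map (antipode R) (antipode R) (TensorProduct.comm R A A (comul a)) := by
  let ι₁ := toConv (Algebra.TensorProduct.includeLeft : A →ₐ[R] A ⊗[R] A)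
  let ι₂ := toConv (Algebra.TensorProduct.includeRight : A →ₐ[R] A ⊗[R] A)
  have hmul : toConv (Bialgebra.comulAlgHom R A) = ι₁ * ι₂ := by
    have : (Algebra.TensorProduct.lmul' R).comp
        (Algebra.TensorProduct.map ι₁.ofConv ι₂.ofConv) = AlgHom.id R (A ⊗[R] A) := by
      ext <;> simp [ι₁, ι₂]
    rw [AlgHom.convMul_def, ← AlgHom.comp_assoc, this, AlgHom.id_comp]
  have hinv : (toConv (Bialgebra.comulAlgHom R A))⁻¹ = ι₂⁻¹ * ι₁⁻¹ :=
    congr(($hmul)⁻¹).trans (mul_inv_rev ι₁ ι₂)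
  have hmap : (Algebra.TensorProduct.lmul' R).comp
      (Algebra.TensorProduct.map (ι₂⁻¹).ofConv (ι₁⁻¹).ofConv) =
      (Algebra.TensorProduct.map (antipodeAlgHom R A) (antipodeAlgHom R A)).comp
        (Algebra.TensorProduct.comm R A A).toAlgHom := by
    ext x
    · change (1 ⊗ₜ antipode R x : A ⊗[R] A) * (antipode R 1 ⊗ₜ 1) = antipode R 1 ⊗ₜ antipode R x
      simp
    · change (1 ⊗ₜ antipode R 1 : A ⊗[R] A) * (antipode R x ⊗ₜ 1) = antipode R x ⊗ₜ antipode R 1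
      simp
  refine congr(ofConv $hinv a).trans ?_
  rw [AlgHom.convMul_def]
  exact congr($hmap (comul a))

end Antipode

section InjectiveTransfer

open Coalgebra HopfAlgebra LinearMap WithConv

/-- The coalgebra axioms transfer along an injective linear map compatible with comultiplication
and counit. -/
noncomputable abbrev coalgebraOfInjective {R C D : Type*} [CommRing R] [AddCommGroup C] [Module R C]
    [AddCommGroup D] [Module R D] [Module.Flat R C] [Module.Flat R D]
    [CoalgebraStruct R C] [Coalgebra R D] (f : C →ₗ[R] D)
    (hf : Function.Injective f) (hcounit : counit ∘ₗ f = counit)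
    (hcomul : TensorProduct.map f f ∘ₗ comul = comul ∘ₗ f) : Coalgebra R C where
  coassoc := by
    have hinj : Function.Injective (TensorProduct.map f (TensorProduct.map f f)) :=
      TensorProduct.map_injective_of_flat_flat _ _ hf
        (TensorProduct.map_injective_of_flat_flat _ _ hf hf)
    rw [← cancel_left hinj]
    calc TensorProduct.map f (TensorProduct.map f f) ∘ₗ
          (TensorProduct.assoc R C C C).toLinearMap ∘ₗ comul.rTensor C ∘ₗ comul
        = (TensorProduct.assoc R D D D).toLinearMap ∘ₗ
            TensorProduct.map (TensorProduct.map f f ∘ₗ comul) f ∘ₗ comul := by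
          simp only [coassoc_simps]
      _ = (TensorProduct.assoc R D D D).toLinearMap ∘ₗ comul.rTensor D ∘ₗ
            TensorProduct.map f f ∘ₗ comul := by
          rw [hcomul, ← rTensor_comp_map, comp_assoc, hcomul]
      _ = comul.lTensor D ∘ₗ TensorProduct.map f f ∘ₗ comul := by
          rw [hcomul]
          exact congr($coassoc ∘ₗ f)
      _ = TensorProduct.map f (TensorProduct.map f f) ∘ₗ comul.lTensor C ∘ₗ comul := by
          rw [← comp_assoc, ← comp_assoc, lTensor_comp_map, map_comp_lTensor, hcomul]
  rTensor_counit_comp_comul := by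
    rw [← cancel_left (Module.Flat.lTensor_preserves_injective_linearMap f hf)]
    calc f.lTensor R ∘ₗ counit.rTensor C ∘ₗ comul
        = counit.rTensor D ∘ₗ TensorProduct.map f f ∘ₗ comul := by
          rw [← comp_assoc, ← comp_assoc, lTensor_comp_rTensor, rTensor_comp_map, hcounit]
      _ = f.lTensor R ∘ₗ TensorProduct.mk R R C 1 := by
          rw [hcomul, ← comp_assoc, rTensor_counit_comp_comul]
          rfl
  lTensor_counit_comp_comul := by
    rw [← cancel_left (Module.Flat.rTensor_preserves_injective_linearMap f hf)]
    calc f.rTensor R ∘ₗ counit.lTensor C ∘ₗ comul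
        = counit.lTensor D ∘ₗ TensorProduct.map f f ∘ₗ comul := by
          rw [← comp_assoc, ← comp_assoc, rTensor_comp_lTensor, lTensor_comp_map, hcounit]
      _ = f.rTensor R ∘ₗ (TensorProduct.mk R C R).flip 1 := by
          rw [hcomul, ← comp_assoc, lTensor_counit_comp_comul]
          rfl

/-- The Hopf algebra axioms transfer along an injective bialgebra homomorphism intertwining
the antipodes. -/
noncomputable abbrev hopfAlgebraOfInjective {R A B : Type*} [CommSemiring R] [Semiring A]
    [Semiring B] [HopfAlgebraStruct R A] [HopfAlgebra R B] (f : A →ₐc[R] B)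
    (hf : Function.Injective f) (hS : f.toLinearMap ∘ₗ antipode R = antipode R ∘ₗ f.toLinearMap) :
    HopfAlgebra R A := by
  have hone : f.toLinearMap ∘ₗ (1 : WithConv (A →ₗ[R] A)).ofConv =
      (1 : WithConv (B →ₗ[R] B)).ofConv ∘ₗ f.toLinearMap :=
    LinearMap.ext fun a ↦ (AlgHomClass.commutes f (counit a)).trans
      congr(algebraMap R B $(CoalgHomClass.counit_comp_apply f a)).symm
  refine .ofConvInverse (antipode R) (ofConv_injective ?_) (ofConv_injective ?_) <;>
    rw [← cancel_left (show Function.Injective f.toLinearMap from hf), hone]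
  · calc (AlgHomClass.toAlgHom f).toLinearMap ∘ₗ
          (toConv (antipode R) * toConv .id : WithConv (A →ₗ[R] A)).ofConv
        = (toConv (antipode R ∘ₗ f.toLinearMap) * toConv f.toLinearMap).ofConv := by
          rw [algHom_comp_convMul_distrib, ← hS]; rfl
      _ = (toConv (antipode R) * toConv .id : WithConv (B →ₗ[R] B)).ofConv ∘ₗ
            f.toCoalgHom.toLinearMap := by
          rw [convMul_comp_coalgHom_distrib]; rfl
      _ = (1 : WithConv (B →ₗ[R] B)).ofConv ∘ₗ f.toLinearMap := by
          rw [antipode_mul_id]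
  · calc (AlgHomClass.toAlgHom f).toLinearMap ∘ₗ
          (toConv .id * toConv (antipode R) : WithConv (A →ₗ[R] A)).ofConv
        = (toConv f.toLinearMap * toConv (antipode R ∘ₗ f.toLinearMap)).ofConv := by
          rw [algHom_comp_convMul_distrib, ← hS]; rfl
      _ = (toConv .id * toConv (antipode R) : WithConv (B →ₗ[R] B)).ofConv ∘ₗ
            f.toCoalgHom.toLinearMap := by
          rw [convMul_comp_coalgHom_distrib]; rfl
      _ = (1 : WithConv (B →ₗ[R] B)).ofConv ∘ₗ f.toLinearMap := by
          rw [id_mul_antipode]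

end InjectiveTransfer

section HopfSubalgebra

open Coalgebra HopfAlgebra

section TensorSquare

variable {R B : Type*} [CommSemiring R] [Semiring B] [Algebra R B]

lemma tmul_mem_range_tensorMap_val {S : Subalgebra R B} {a b : B} (ha : a ∈ S) (hb : b ∈ S) :
    a ⊗ₜ[R] b ∈ (Algebra.TensorProduct.map S.val S.val).range :=
  ⟨⟨a, ha⟩ ⊗ₜ ⟨b, hb⟩, by simp⟩

lemma range_tensorMap_val_mono :
    Monotone fun S : Subalgebra R B ↦ (Algebra.TensorProduct.map S.val S.val).range := by
  rintro S T h _ ⟨t, rfl⟩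
  let i := Subalgebra.inclusion h
  exact ⟨Algebra.TensorProduct.map i i t,
    congr($(Algebra.TensorProduct.map_comp T.val i T.val i) t).symm⟩

lemma tensorMap_val_injective {k B : Type*} [Field k] [Ring B] [Algebra k B] (S : Subalgebra k B) :
    Function.Injective (Algebra.TensorProduct.map S.val S.val) :=
  TensorProduct.map_injective_of_flat_flat _ _
    (Subtype.val_injective : Function.Injective S.val.toLinearMap) Subtype.val_injective

end TensorSquare

variable {k B : Type*} [Field k] [CommRing B] [HopfAlgebra k B]

/-- A Hopf subalgebra: a subalgebra stable under the antipode whose comultiplication takes values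
in the image of `S ⊗ S` in `B ⊗ B`. -/
class IsHopfSubalgebra (S : Subalgebra k B) : Prop where
  comul_mem : S ≤ (Algebra.TensorProduct.map S.val S.val).range.comap (Bialgebra.comulAlgHom k B)
  antipode_mem : S ≤ S.comap (antipodeAlgHom k B)

namespace IsHopfSubalgebra

section Structure

variable (S : Subalgebra k B) [IsHopfSubalgebra S]

/-- The comultiplication of a Hopf subalgebra, as an algebra homomorphism. -/
noncomputable def comulAlgHom : S →ₐ[k] S ⊗[k] S :=
  (AlgEquiv.ofInjective _ (tensorMap_val_injective S)).symm.toAlgHom.comp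
    (((Bialgebra.comulAlgHom k B).comp S.val).codRestrict _ fun x ↦ comul_mem x.2)

noncomputable instance : CoalgebraStruct k S where
  comul := (comulAlgHom S).toLinearMap
  counit := counit ∘ₗ S.val.toLinearMap

lemma map_val_comul (x : S) :
    Algebra.TensorProduct.map S.val S.val (comul x) = comul (R := k) (x : B) :=
  congrArg Subtype.val ((AlgEquiv.ofInjective _ (tensorMap_val_injective S)).apply_symm_apply _)

noncomputable instance : Coalgebra k S :=
  coalgebraOfInjective S.val.toLinearMap Subtype.val_injective rfl
    (LinearMap.ext (map_val_comul S))

noncomputable instance : Bialgebra k S :=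
  .mk' k S (Bialgebra.counit_one (A := B)) (Bialgebra.counit_mul (A := B) _ _)
    (map_one (comulAlgHom S)) (map_mul (comulAlgHom S) _ _)

/-- The inclusion of a Hopf subalgebra. -/
noncomputable def valBialgHom : S →ₐc[k] B :=
  .ofAlgHom S.val rfl (AlgHom.ext (map_val_comul S))

noncomputable instance : HopfAlgebraStruct k S where
  antipode := (((antipodeAlgHom k B).comp S.val).codRestrict S fun x ↦ antipode_mem x.2).toLinearMap

noncomputable instance : HopfAlgebra k S :=
  hopfAlgebraOfInjective (valBialgHom S) Subtype.val_injective rfl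

variable {S}

/-- The corestriction of a homomorphism of Hopf algebras to a Hopf subalgebra containing its
range. -/
noncomputable def codRestrict {A : Type*} [Semiring A] [Bialgebra k A] (f : A →ₐc[k] B)
    (h : ∀ a, f a ∈ S) : A →ₐc[k] S :=
  let g : A →ₐ[k] S := (f : A →ₐ[k] B).codRestrict S h
  .ofAlgHom g (BialgHom.counitAlgHom_comp f) <| AlgHom.ext fun a ↦ tensorMap_val_injective S <|
    calc Algebra.TensorProduct.map S.val S.val (Algebra.TensorProduct.map g g (comul a))
        = Algebra.TensorProduct.map (f : A →ₐ[k] B) (f : A →ₐ[k] B) (comul a) :=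
          congr($(Algebra.TensorProduct.map_comp S.val g S.val g) (comul a)).symm
      _ = comul (f a) := CoalgHomClass.map_comp_comul_apply f a
      _ = Algebra.TensorProduct.map S.val S.val (comul (g a)) := (map_val_comul S (g a)).symm

end Structure

instance bot : IsHopfSubalgebra (⊥ : Subalgebra k B) := ⟨bot_le, bot_le⟩

instance iSup {ι : Sort*} (S : ι → Subalgebra k B) [h : ∀ i, IsHopfSubalgebra (S i)] :
    IsHopfSubalgebra (⨆ i, S i) where
  comul_mem := iSup_le fun i ↦ (h i).comul_mem.trans
    ((Subalgebra.gc_map_comap _).monotone_u (range_tensorMap_val_mono (le_iSup S i)))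
  antipode_mem := iSup_le fun i ↦
    (h i).antipode_mem.trans ((Subalgebra.gc_map_comap _).monotone_u (le_iSup S i))

instance sup (S T : Subalgebra k B) [IsHopfSubalgebra S] [IsHopfSubalgebra T] :
    IsHopfSubalgebra (S ⊔ T) := by
  have (b : Bool) : IsHopfSubalgebra (cond b S T) := by cases b <;> assumption
  exact sup_eq_iSup S T ▸ iSup _

instance range {A : Type*} [CommRing A] [HopfAlgebra k A] (f : A →ₐc[k] B) :
    IsHopfSubalgebra (f : A →ₐ[k] B).range where
  comul_mem := by
    rintro _ ⟨a, rfl⟩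
    let g := (f : A →ₐ[k] B).rangeRestrict
    exact ⟨Algebra.TensorProduct.map g g (comul a),
      congr($(Algebra.TensorProduct.map_comp _ g _ g) (comul a)).symm.trans
        (CoalgHomClass.map_comp_comul_apply f a)⟩
  antipode_mem := by
    rintro _ ⟨a, rfl⟩
    exact ⟨antipode k a, bialgHom_antipode f a⟩

lemma adjoin_of_comultiplicative_matrix {ι : Type*} [Fintype ι] {d : ι → ι → B}
    (hd : ∀ i j, comul (R := k) (d i j) = ∑ l, d i l ⊗ₜ d l j) :
    IsHopfSubalgebra (Algebra.adjoin k
      (.range (fun p : ι × ι ↦ d p.1 p.2) ∪ .range fun p : ι × ι ↦ antipode k (d p.1 p.2))) := by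
  set S := Algebra.adjoin k
    (.range (fun p : ι × ι ↦ d p.1 p.2) ∪ .range fun p : ι × ι ↦ antipode k (d p.1 p.2))
  have hdS (i j) : d i j ∈ S := Algebra.subset_adjoin (.inl ⟨(i, j), rfl⟩)
  have hdS' (i j) : antipode k (d i j) ∈ S := Algebra.subset_adjoin (.inr ⟨(i, j), rfl⟩)
  refine ⟨Algebra.adjoin_le ?_, Algebra.adjoin_le ?_⟩
  · rintro _ (⟨⟨i, j⟩, rfl⟩ | ⟨⟨i, j⟩, rfl⟩)
    · change comul (R := k) (d i j) ∈ (Algebra.TensorProduct.map S.val S.val).range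
      rw [hd]
      exact sum_mem fun l _ ↦ tmul_mem_range_tensorMap_val (hdS _ _) (hdS _ _)
    · change comul (R := k) (antipode k (d i j)) ∈ (Algebra.TensorProduct.map S.val S.val).range
      rw [comul_antipode, hd]
      simp only [map_sum, TensorProduct.comm_tmul, TensorProduct.map_tmul]
      exact sum_mem fun l _ ↦ tmul_mem_range_tensorMap_val (hdS' _ _) (hdS' _ _)
  · rintro _ (⟨⟨i, j⟩, rfl⟩ | ⟨⟨i, j⟩, rfl⟩)
    · exact hdS' i j
    · change antipode k (antipode k (d i j)) ∈ S
      rw [antipode_antipode]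
      exact hdS i j

lemma exists_fg_mem (b : B) : ∃ S : Subalgebra k B, IsHopfSubalgebra S ∧ S.FG ∧ b ∈ S := by
  obtain ⟨n, d, hd, hb⟩ := exists_comultiplicative_matrix (k := k) b
  refine ⟨_, adjoin_of_comultiplicative_matrix hd,
    Subalgebra.fg_def.2 ⟨_, (Set.finite_range _).union (Set.finite_range _), rfl⟩, ?_⟩
  exact Algebra.adjoin_mono Set.subset_union_left (Algebra.span_le_adjoin k _ hb)

lemma exists_fg_subset {s : Set B} (hs : s.Finite) :
    ∃ S : Subalgebra k B, IsHopfSubalgebra S ∧ S.FG ∧ s ⊆ S := by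
  induction s, hs using Set.Finite.induction_on with
  | empty => exact ⟨⊥, bot, Subalgebra.fg_bot, Set.empty_subset _⟩
  | @insert b s _ _ ih =>
    obtain ⟨S, _, hS, hsS⟩ := ih
    obtain ⟨T, _, hT, hbT⟩ := exists_fg_mem (k := k) b
    exact ⟨T ⊔ S, sup T S, hT.sup hS, Set.insert_subset
      ((le_sup_left : T ≤ T ⊔ S) hbT) (hsS.trans (le_sup_right : S ≤ T ⊔ S))⟩

end IsHopfSubalgebra

end HopfSubalgebra

section Extension

open Coalgebra WithConv

lemma apply_leftSlice_comul {R E : Type*} [CommSemiring R] [Semiring E] [Bialgebra R E]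
    (z u : WithConv (E →ₐ[R] R)) (a : E) :
    u.ofConv (leftSlice E z.ofConv.toLinearMap (comul a)) = (z * u).ofConv a := by
  change u.ofConv (leftSlice E z.ofConv.toLinearMap (comul a)) = Algebra.TensorProduct.lmul' R
    (Algebra.TensorProduct.map z.ofConv u.ofConv (comul a))
  induction comul (R := R) a with
  | zero => simp
  | add x y hx hy => simp only [map_add, hx, hy]
  | tmul x y => simp

variable {k : Type*} [Field k] [IsAlgClosed k]

/-- The liftable points form a subgroup containing a nonempty open set. A translate `z * g` of some
liftable `g` lies in that open set, so `z` is a quotient of two liftable points. -/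
lemma exists_algHom_comp_eq_of_finiteType {E D : Type*} [CommRing E] [CommRing D]
    [HopfAlgebra k E] [HopfAlgebra k D] [Algebra.FiniteType k E] [Algebra.FiniteType k D]
    (f : E →ₐc[k] D) (hf : Function.Injective f) (z : E →ₐ[k] k) :
    ∃ y : D →ₐ[k] k, y.comp (f : E →ₐ[k] D) = z := by
  have : Nontrivial E := z.toRingHom.domain_nontrivial
  have : IsNoetherianRing E := Algebra.FiniteType.isNoetherianRing k E
  have hft : (f : E →ₐ[k] D).FiniteType := RingHom.FiniteType.of_comp_finiteType
    (f := algebraMap k E)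
    ((f : E →ₐ[k] D).comp_algebraMap ▸ RingHom.finiteType_algebraMap.2 ‹_›)
  obtain ⟨s, hs, hlift⟩ := exists_not_isNilpotent_forall_exists_comp_eq hft hf
  let pull (g : WithConv (D →ₐ[k] k)) : WithConv (E →ₐ[k] k) :=
    toConv (g.ofConv.comp (f : E →ₐ[k] D))
  have pull_mul (g h) : pull (g * h) = pull g * pull h :=
    ofConv_injective (AlgHom.convMul_comp_bialgHom_distrib g h f)
  let s' := leftSlice E z.toLinearMap (comul s)
  have hs' (u : WithConv (E →ₐ[k] k)) : u.ofConv s' = (toConv z * u).ofConv s :=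
    apply_leftSlice_comul (toConv z) u s
  have hfs' : ¬ IsNilpotent (f s') := by
    rw [IsNilpotent.map_iff hf]
    intro hnil
    obtain ⟨v, hv⟩ := exists_algHom_apply_ne_zero (k := k) hs
    have := hs' ((toConv z)⁻¹ * toConv v)
    rw [mul_inv_cancel_left, (hnil.map _).eq_zero] at this
    exact hv this.symm
  obtain ⟨g, hg⟩ := exists_algHom_apply_ne_zero (k := k) hfs'
  obtain ⟨h, hh⟩ := hlift (toConv z * pull (toConv g)).ofConv (hs' (pull (toConv g)) ▸ hg)
  have hpull : pull (toConv h) = toConv z * pull (toConv g) := ofConv_injective hh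
  refine ⟨(toConv h * (toConv g)⁻¹).ofConv, congrArg ofConv (?_ : pull _ = toConv z)⟩
  apply mul_right_cancel (b := pull (toConv g))
  rw [← pull_mul, inv_mul_cancel_right, hpull]

/-- A relation `1 = ∑ b_l f(a_l)` with `z(a_l) = 0` would already hold in finitely generated Hopf
subalgebras, to which `z` extends. -/
lemma map_ker_ne_top_of_injective {C B : Type*} [CommRing C] [CommRing B] [HopfAlgebra k C]
    [HopfAlgebra k B] (f : C →ₐc[k] B) (hf : Function.Injective f) (z : C →ₐ[k] k) :
    (RingHom.ker z).map f ≠ ⊤ := by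
  intro htop
  obtain ⟨n, b, c, hbc⟩ := Submodule.mem_span_set'.1 ((Ideal.eq_top_iff_one _).1 htop)
  choose a ha hac using fun l ↦ (c l).2
  obtain ⟨E, _, hE, haE⟩ := IsHopfSubalgebra.exists_fg_subset (k := k) (Set.finite_range a)
  obtain ⟨T, _, hT, hbT⟩ := IsHopfSubalgebra.exists_fg_subset (k := k) (Set.finite_range b)
  let i := f.comp (IsHopfSubalgebra.valBialgHom E)
  let D := (i : E →ₐ[k] B).range ⊔ T
  have : IsHopfSubalgebra D := inferInstance
  have : Algebra.FiniteType k E := (Subalgebra.fg_iff_finiteType _).1 hE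
  have : Algebra.FiniteType k D := by
    refine (Subalgebra.fg_iff_finiteType _).1 (.sup ?_ hT)
    exact Algebra.map_top (i : E →ₐ[k] B) ▸ Algebra.FiniteType.out.map _
  let g : E →ₐc[k] D := IsHopfSubalgebra.codRestrict i fun e ↦
    (le_sup_left : (i : E →ₐ[k] B).range ≤ D) ⟨e, rfl⟩
  have hg : Function.Injective g := fun x y hxy ↦
    Subtype.val_injective (hf (congrArg Subtype.val hxy))
  obtain ⟨y, hy⟩ := exists_algHom_comp_eq_of_finiteType g hg (z.comp E.val)
  let a' (l) : E := ⟨a l, haE ⟨l, rfl⟩⟩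
  let b' (l) : D := ⟨b l, (le_sup_right : T ≤ D) (hbT ⟨l, rfl⟩)⟩
  have hone : ∑ l, b' l * g (a' l) = 1 := by
    apply Subtype.val_injective
    calc D.val (∑ l, b' l * g (a' l)) = ∑ l, b l * f (a l) := map_sum D.val _ _
      _ = 1 := hbc ▸ Finset.sum_congr rfl fun l _ ↦ congr(b l * $(hac l))
  have hzero (l) : y (b' l * g (a' l)) = 0 := by
    have : y (g (a' l)) = z (a l) := congr($hy (a' l))
    rw [map_mul, this, RingHom.mem_ker.1 (ha l), mul_zero]
  have := congrArg y hone
  simp [hzero] at this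

end Extension

lemma inclusion_sup_finiteType {R B : Type*} [CommRing R] [CommRing B] [Algebra R B]
    (S : Subalgebra R B) {T : Subalgebra R B} (hT : T.FG) :
    (Subalgebra.inclusion (le_sup_left : S ≤ S ⊔ T)).FiniteType := by
  have : Algebra.FiniteType R T := (Subalgebra.fg_iff_finiteType T).1 hT
  have hrange : (Algebra.TensorProduct.productMap S.val T.val).range = S ⊔ T := by
    rw [Algebra.TensorProduct.productMap_range, S.range_val, T.range_val]
  let μ : S ⊗[R] T →ₐ[R] ↥(S ⊔ T) :=
    (Algebra.TensorProduct.productMap S.val T.val).codRestrict _ fun t ↦ hrange ▸ ⟨t, rfl⟩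
  have hμ : Function.Surjective μ := fun x ↦ by
    obtain ⟨t, ht⟩ := hrange.ge x.2
    exact ⟨t, Subtype.ext ht⟩
  have hμS : μ.comp Algebra.TensorProduct.includeLeft = Subalgebra.inclusion le_sup_left := by
    ext s
    simp [μ]
  have hleft : (Algebra.TensorProduct.includeLeft : S →ₐ[R] S ⊗[R] T).FiniteType :=
    RingHom.finiteType_algebraMap.2 (inferInstance : Algebra.FiniteType S (S ⊗[R] T))
  exact hμS ▸ hleft.comp_surjective hμ

section Zorn

/-- A `k`-point of some Hopf subalgebra of `B`. These partial points are ordered by extension. -/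
structure PartialPoint (k B : Type*) [Field k] [CommRing B] [HopfAlgebra k B] where
  /-- The domain of definition. -/
  carrier : Subalgebra k B
  [isHopfSubalgebra : IsHopfSubalgebra carrier]
  /-- The point. -/
  point : carrier →ₐ[k] k

namespace PartialPoint

variable {k B : Type*} [Field k] [CommRing B] [HopfAlgebra k B]

attribute [instance] isHopfSubalgebra

instance : Preorder (PartialPoint k B) where
  le p q := ∃ h : p.carrier ≤ q.carrier, q.point.comp (Subalgebra.inclusion h) = p.point
  le_refl p := ⟨le_rfl, rfl⟩
  le_trans p q r := by
    rintro ⟨h, hpq⟩ ⟨h', hqr⟩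
    exact ⟨h.trans h', hpq ▸ hqr ▸ rfl⟩

lemma bddAbove_of_isChain {c : Set (PartialPoint k B)} (hc : IsChain (· ≤ ·) c)
    (hne : c.Nonempty) : BddAbove c := by
  have : Nonempty c := hne.to_subtype
  have htotal (p q : c) : p.1 ≤ q.1 ∨ q.1 ≤ p.1 := hc.total p.2 q.2
  have hdir : Directed (· ≤ ·) fun p : c ↦ p.1.carrier := fun p q ↦ by
    rcases htotal p q with h | h
    · exact ⟨q, h.1, le_rfl⟩
    · exact ⟨p, le_rfl, h.1⟩
  have hcompat (p q : c) (h : p.1.carrier ≤ q.1.carrier) :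
      p.1.point = q.1.point.comp (Subalgebra.inclusion h) := by
    rcases htotal p q with ⟨_, hpq⟩ | ⟨_, hqp⟩
    · exact hpq.symm
    · exact hqp ▸ rfl
  refine ⟨⟨⨆ p : c, p.1.carrier,
    Subalgebra.iSupLift _ hdir (fun p ↦ p.1.point) hcompat _ le_rfl⟩, fun p hp ↦ ?_⟩
  exact ⟨le_iSup (fun p : c ↦ p.1.carrier) ⟨p, hp⟩, Subalgebra.iSupLift_comp_inclusion
    (dir := hdir) (hf := hcompat) (hT := le_rfl) (i := ⟨p, hp⟩) _ _⟩

lemma carrier_eq_top_of_isMax [IsAlgClosed k] {p : PartialPoint k B} (hp : IsMax p) :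
    p.carrier = ⊤ := by
  refine eq_top_iff.2 fun b _ ↦ ?_
  obtain ⟨T, _, hT, hb⟩ := IsHopfSubalgebra.exists_fg_mem (k := k) b
  let i : p.carrier →ₐ[k] ↥(p.carrier ⊔ T) := Subalgebra.inclusion le_sup_left
  have hfibre : (RingHom.ker p.point).map i ≠ ⊤ := fun htop ↦
    map_ker_ne_top_of_injective (IsHopfSubalgebra.valBialgHom p.carrier) Subtype.val_injective
      p.point <| by
        have := congrArg (Ideal.map (p.carrier ⊔ T).val) htop
        rwa [Ideal.map_mapₐ, Ideal.map_top] at this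
  obtain ⟨y, hy⟩ :=
    exists_algHom_comp_eq_of_map_ker_ne_top (inclusion_sup_finiteType p.carrier hT) hfibre
  have hle : p ≤ ⟨p.carrier ⊔ T, y⟩ := ⟨le_sup_left, hy⟩
  exact (hp hle).1 ((le_sup_right : T ≤ p.carrier ⊔ T) hb)

end PartialPoint

end Zorn

theorem stmt_6_general {k A B : Type*} [Field k] [IsAlgClosed k] [CommRing A] [CommRing B]
    [HopfAlgebra k A] [HopfAlgebra k B] (f : A →ₐc[k] B) (hf : Function.Injective f)
    (x : A →ₐ[k] k) : ∃ y : B →ₐ[k] k, y.comp (f : A →ₐ[k] B) = x := by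
  let e := AlgEquiv.ofInjective (f : A →ₐ[k] B) hf
  let p₀ : PartialPoint k B := ⟨(f : A →ₐ[k] B).range, x.comp e.symm⟩
  obtain ⟨p, ⟨_, hp₀⟩, hp⟩ := zorn_le_nonempty_Ici₀ p₀
    (fun c _ hc q hq ↦ PartialPoint.bddAbove_of_isChain hc ⟨q, hq⟩) p₀ le_rfl
  have htop : p.carrier = ⊤ := PartialPoint.carrier_eq_top_of_isMax hp
  refine ⟨p.point.comp ((AlgHom.id k B).codRestrict _ fun _ ↦ htop ▸ trivial), ?_⟩
  ext a
  exact congr($hp₀ (e a)).trans (congrArg x (e.symm_apply_apply a))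

/-- Let `k` be an algebraically closed field, `A`, `B` commutative and
cocommutative Hopf algebras over `k`, and `f : A → B` a homomorphism of Hopf algebras such
that `B` is faithfully flat as an `A`-module via `f`.  Then every `k`-algebra homomorphism
`x : A → k` extends along `f` to a `k`-algebra homomorphism `y : B → k` with `y ∘ f = x`. -/
theorem stmt_6 (k : Type*) [Field k] [IsAlgClosed k]
    (A B : Type*) [CommRing A] [CommRing B] [HopfAlgebra k A] [HopfAlgebra k B]
    (hA : (TensorProduct.comm k A A).toLinearMap ∘ₗ (Coalgebra.comul (R := k) (A := A))
        = (Coalgebra.comul : A →ₗ[k] A ⊗[k] A))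
    (hB : (TensorProduct.comm k B B).toLinearMap ∘ₗ (Coalgebra.comul (R := k) (A := B))
        = (Coalgebra.comul : B →ₗ[k] B ⊗[k] B))
    (f : A →ₐc[k] B)
    (hff : letI : Algebra A B := (f : A →+* B).toAlgebra
           Module.FaithfullyFlat A B)
    (x : A →ₐ[k] k) :
    ∃ y : B →ₐ[k] k, y.comp (f : A →ₐ[k] B) = x := by
  let _ : Algebra A B := (f : A →+* B).toAlgebra
  have : Module.FaithfullyFlat A B := hff
  exact stmt_6_general f (FaithfulSMul.algebraMap_injective A B) x
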